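/- Let S and Q be finite nonempty types, P : S → PMF S a Markov chain transition function, L : S → W a labelling, δ : Q → W → Q a deterministic automaton transition function, and q* ∈ Q. Let (μ_s)_{s∈S} be a trajectory measure family for (S, P), and let (ν_{(s,q)}) be a trajectory measure family for the product Markov chain on S × Q whose transitions are T'(s₁, q₁)(s₂, q₂) = P s₁ s₂ if δ q₁ (L s₁) = q₂ and 0 otherwise. Define Φ : (ℕ → S) → (ℕ → S × Q) by Φ(ω)(n) = (ω n, ρ_ω n), where ρ_ω 0 = q* and ρ_ω (n+1) = δ (ρ_ω n) (L (ω n)). Then for every s ∈ S, the pushforward of μ_s under Φ equals ν_{(s, q*)}. -/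

import Mathlib

open scoped ENNReal

/-- A trajectory measure family for a Markov chain with transition
probabilities `P` (values in `ℝ≥0∞`). -/
def IsTrajectoryMeasureFamily {X : Type*} [MeasurableSpace X] [DecidableEq X]
    (P : X → X → ℝ≥0∞) (μ : X → MeasureTheory.Measure (ℕ → X)) : Prop :=
  ∀ x : X, MeasureTheory.IsProbabilityMeasure (μ x) ∧
    ∀ (n : ℕ) (f : ℕ → X),
      μ x {ω | ∀ k ≤ n, ω k = f k} =
        if f 0 = x then ∏ k ∈ Finset.range n, P (f k) (f (k + 1)) else 0

/-- The run of the deterministic automaton `(δ, q*)` along the labels of a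
trajectory `ω`: `ρ 0 = q*`, `ρ (n+1) = δ (ρ n) (L (ω n))`. -/
def autRun {S Q W : Type*} (δ : Q → W → Q) (L : S → W) (qstar : Q)
    (ω : ℕ → S) : ℕ → Q
  | 0 => qstar
  | n + 1 => δ (autRun δ L qstar ω n) (L (ω n))

/-
For finite measures on sequences in countable spaces, the initial cylinders determine the measure.
The preimage under `Φ` of a cylinder around `f` is the cylinder around the first component of `f` if
the second component of `f` is the automaton run induced by the first, and is empty otherwise. The
indicators in the product transitions express exactly this compatibility.
-/

open MeasureTheory Preorder

section Cylinders

variable {X : ℕ → Type*}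

lemma frestrictLe_preimage_singleton (n : ℕ) (f : ∀ k, X k) :
    frestrictLe (π := X) n ⁻¹' {frestrictLe n f} = {ω | ∀ k ≤ n, ω k = f k} := by
  ext ω
  simp [funext_iff]

variable [∀ k, MeasurableSpace (X k)] [∀ k, MeasurableSingletonClass (X k)]

lemma measurableSet_setOf_forall_le_eq (n : ℕ) (f : ∀ k, X k) :
    MeasurableSet {ω : ∀ k, X k | ∀ k ≤ n, ω k = f k} :=
  frestrictLe_preimage_singleton n f ▸ measurable_frestrictLe n (measurableSet_singleton _)

lemma map_frestrictLe_eq_of_forall_le_eq [∀ k, Countable (X k)] {μ ν : Measure (∀ k, X k)} (n : ℕ)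
    (h : ∀ f : ∀ k, X k, μ {ω | ∀ k ≤ n, ω k = f k} = ν {ω | ∀ k ≤ n, ω k = f k}) :
    μ.map (frestrictLe n) = ν.map (frestrictLe n) := by
  refine Measure.ext_of_singleton fun g => ?_
  have hg : MeasurableSet {g} := measurableSet_singleton g
  rw [Measure.map_apply (measurable_frestrictLe n) hg,
    Measure.map_apply (measurable_frestrictLe n) hg]
  rcases (frestrictLe (π := X) n ⁻¹' {g}).eq_empty_or_nonempty with hempty | ⟨f, rfl⟩
  · rw [hempty, measure_empty, measure_empty]
  · rw [frestrictLe_preimage_singleton, h f]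

theorem measure_ext_of_forall_le_eq [∀ k, Countable (X k)] {μ ν : Measure (∀ k, X k)}
    [IsFiniteMeasure μ]
    (h : ∀ (n : ℕ) (f : ∀ k, X k), μ {ω | ∀ k ≤ n, ω k = f k} = ν {ω | ∀ k ≤ n, ω k = f k}) :
    μ = ν := by
  have hproj : IsProjectiveMeasureFamily fun I => μ.map I.restrict :=
    ProbabilityTheory.isProjectiveMeasureFamily_map_restrict fun k =>
      (measurable_pi_apply k).aemeasurable
  have hν : IsProjectiveLimit ν fun I => μ.map I.restrict :=
    (isProjectiveLimit_nat_iff hproj ν).2 fun n =>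
      (map_frestrictLe_eq_of_forall_le_eq n (h n)).symm
  exact IsProjectiveLimit.unique (fun _ => rfl) hν

end Cylinders

section Automaton

variable {S Q W : Type*} (δ : Q → W → Q) (L : S → W) (qstar : Q)

/-- The trajectory of the product chain induced by a trajectory `ω` of the original chain: the map
`Φ` pairing `ω` with the automaton run along its labels. -/
def runTrajectory (ω : ℕ → S) (n : ℕ) : S × Q :=
  (ω n, autRun δ L qstar ω n)

/-- The transition weights `T'` of the product of a Markov chain with a deterministic automaton. The
weights `P` are arbitrary here, not necessarily stochastic. -/
def productTransition [DecidableEq Q] (P : S → S → ℝ≥0∞) (p q : S × Q) : ℝ≥0∞ :=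
  if δ p.2 (L p.1) = q.2 then P p.1 q.1 else 0

variable {δ L} in
lemma measurable_autRun [MeasurableSpace S] [MeasurableSpace Q]
    (hδ : Measurable fun p : S × Q => δ p.2 (L p.1)) (n : ℕ) :
    Measurable fun ω => autRun δ L qstar ω n := by
  induction n with
  | zero => exact measurable_const
  | succ n ih => exact hδ.comp ((measurable_pi_apply n).prodMk ih)

variable {δ L} in
lemma measurable_runTrajectory [MeasurableSpace S] [MeasurableSpace Q]
    (hδ : Measurable fun p : S × Q => δ p.2 (L p.1)) :
    Measurable (runTrajectory δ L qstar) :=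
  measurable_pi_lambda _ fun n => (measurable_pi_apply n).prodMk (measurable_autRun qstar hδ n)

lemma forall_le_runTrajectory_eq_iff (ω : ℕ → S) (f : ℕ → S × Q) (n : ℕ) :
    (∀ k ≤ n, runTrajectory δ L qstar ω k = f k) ↔
      (∀ k ≤ n, ω k = (f k).1) ∧ qstar = (f 0).2 ∧
        ∀ k < n, δ (f k).2 (L (f k).1) = (f (k + 1)).2 := by
  constructor
  · intro h
    refine ⟨fun k hk => congrArg Prod.fst (h k hk), congrArg Prod.snd (h 0 n.zero_le),
      fun k hk => ?_⟩
    rw [← h k hk.le, ← h (k + 1) hk]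
    rfl
  · rintro ⟨hfst, hstart, hstep⟩ k hk
    refine Prod.ext (hfst k hk) ?_
    induction k with
    | zero => exact hstart
    | succ k ih =>
      calc autRun δ L qstar ω (k + 1) = δ (autRun δ L qstar ω k) (L (ω k)) := rfl
        _ = δ (f k).2 (L (f k).1) := by
          rw [hfst k (Nat.le_of_succ_le hk)]
          exact congrArg (δ · _) (ih (Nat.le_of_succ_le hk))
        _ = (f (k + 1)).2 := hstep k hk

variable [DecidableEq Q] (P : S → S → ℝ≥0∞)

lemma prod_productTransition (n : ℕ) (f : ℕ → S × Q) :
    ∏ k ∈ Finset.range n, productTransition δ L P (f k) (f (k + 1)) =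
      if ∀ k ∈ Finset.range n, δ (f k).2 (L (f k).1) = (f (k + 1)).2 then
        ∏ k ∈ Finset.range n, P (f k).1 (f (k + 1)).1 else 0 :=
  Finset.prod_ite_zero

variable {P} [DecidableEq S] [MeasurableSpace S] {μ : S → Measure (ℕ → S)}

lemma IsTrajectoryMeasureFamily.measure_forall_le_runTrajectory_eq
    (hμ : IsTrajectoryMeasureFamily P μ) (s : S) (n : ℕ) (f : ℕ → S × Q) :
    μ s {ω | ∀ k ≤ n, runTrajectory δ L qstar ω k = f k} =
      if f 0 = (s, qstar) then
        ∏ k ∈ Finset.range n, productTransition δ L P (f k) (f (k + 1)) else 0 := by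
  simp only [forall_le_runTrajectory_eq_iff, prod_productTransition, Finset.mem_range]
  by_cases hstart : qstar = (f 0).2
  · by_cases hstep : ∀ k < n, δ (f k).2 (L (f k).1) = (f (k + 1)).2
    · have hμf := (hμ s).2 n fun k => (f k).1
      simpa only [and_iff_left (And.intro hstart hstep), if_pos hstep, Prod.ext_iff,
        and_iff_left hstart.symm] using hμf
    · simp [hstep]
  · have hf : f 0 ≠ (s, qstar) := fun h => hstart (congrArg Prod.snd h).symm
    simp [hstart, hf]

theorem trajectory_measure_map_eq_product_general [Countable S] [MeasurableSingletonClass S]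
    [Countable Q] [MeasurableSpace Q] [MeasurableSingletonClass Q]
    {ν : S × Q → Measure (ℕ → S × Q)} (hμ : IsTrajectoryMeasureFamily P μ)
    (hν : IsTrajectoryMeasureFamily (productTransition δ L P) ν) (s : S) :
    (μ s).map (runTrajectory δ L qstar) = ν (s, qstar) := by
  have hΦ : Measurable (runTrajectory δ L qstar) :=
    measurable_runTrajectory qstar (measurable_of_countable _)
  have : IsProbabilityMeasure (μ s) := (hμ s).1
  refine measure_ext_of_forall_le_eq fun n f => ?_
  calc (μ s).map (runTrajectory δ L qstar) {ω | ∀ k ≤ n, ω k = f k}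
      = μ s {ω | ∀ k ≤ n, runTrajectory δ L qstar ω k = f k} :=
        Measure.map_apply hΦ (measurableSet_setOf_forall_le_eq n f)
    _ = if f 0 = (s, qstar) then
          ∏ k ∈ Finset.range n, productTransition δ L P (f k) (f (k + 1)) else 0 :=
        hμ.measure_forall_le_runTrajectory_eq δ L qstar s n f
    _ = ν (s, qstar) {ω | ∀ k ≤ n, ω k = f k} := ((hν (s, qstar)).2 n f).symm

end Automaton

/-- the pushforward of the trajectory measure of a Markov chain
under the map pairing a trajectory with the induced automaton run equals the
trajectory measure of the product Markov chain started at `(s, q*)`. -/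
theorem trajectory_measure_map_eq_product {S Q W : Type*}
    [Fintype S] [Nonempty S] [DecidableEq S]
    [Fintype Q] [Nonempty Q] [DecidableEq Q]
    (P : S → PMF S) (L : S → W) (δ : Q → W → Q) (qstar : Q) :
    letI : MeasurableSpace S := ⊤
    letI : MeasurableSpace Q := ⊤
    ∀ (μ : S → MeasureTheory.Measure (ℕ → S))
      (ν : S × Q → MeasureTheory.Measure (ℕ → S × Q)),
      IsTrajectoryMeasureFamily (fun a b => P a b) μ →
      IsTrajectoryMeasureFamily
        (fun p q : S × Q => if δ p.2 (L p.1) = q.2 then P p.1 q.1 else 0) ν →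
      ∀ s : S,
        MeasureTheory.Measure.map
          (fun ω n => (ω n, autRun δ L qstar ω n)) (μ s) = ν (s, qstar) := by
  let : MeasurableSpace S := ⊤
  let : MeasurableSpace Q := ⊤
  exact fun _ _ hμ hν => trajectory_measure_map_eq_product_general δ L qstar hμ hν
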